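/- arXiv:math/0401144 — 2 statements merged into one kernel-verified Lean document; each statement's English description precedes it below -/
import Mathlib

section
/- Let t₀ < t be reals, τ > 0, and let g : ℝ → ℝ be measurable with |g(x)| ≤ M for all x ∈ [t₀, t]. Define the first-order memory functional Φ(s) = (1/(t − t₀)) ∫_{t₀}^{s} exp(−(t − x)²/τ²) · g(x) dx for s ∈ [t₀, t]. Then the second-order memory term satisfies |(1/(t − t₀)) ∫_{t₀}^{t} exp(−(t − s)²/τ²) · Φ(s) ds| ≤ π M τ² / (4 (t − t₀)²). -/
/-!
Let `w` be a nonnegative weight with primitive `W s = ∫ x in a..s, w x`. The inner integral of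
`w • g` is at most `M * W s`, and `w * W` is the derivative of `W ^ 2 / 2`, so the iterated
integral is at most `M * W b ^ 2 / 2`. For the Gaussian weight centred at the right endpoint, `W b`
is at most the half-line Gaussian integral `√π * τ / 2`, which yields the bound even with `π / 8`
in place of `π / 4`.
-/

open MeasureTheory intervalIntegral Real

section WeightedIntegrals

variable {E : Type*} [NormedAddCommGroup E] [NormedSpace ℝ E] {a b M : ℝ} {w : ℝ → ℝ} {g : ℝ → E}

lemma norm_integral_smul_le_mul_integral (hab : a ≤ b) (hw : IntervalIntegrable w volume a b)
    (hw_nonneg : ∀ x ∈ Set.Ioc a b, 0 ≤ w x) (hg : ∀ x ∈ Set.Ioc a b, ‖g x‖ ≤ M) :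
    ‖∫ x in a..b, w x • g x‖ ≤ M * ∫ x in a..b, w x := by
  rw [← intervalIntegral.integral_const_mul]
  refine intervalIntegral.norm_integral_le_of_norm_le hab (ae_of_all _ fun x hx => ?_)
    (hw.const_mul M)
  rw [norm_smul, Real.norm_of_nonneg (hw_nonneg x hx), mul_comm]
  exact mul_le_mul_of_nonneg_right (hg x hx) (hw_nonneg x hx)

lemma integral_mul_integral_eq_sq_div_two (hw : IntervalIntegrable w volume a b) :
    ∫ s in a..b, w s * ∫ x in a..s, w x = (∫ x in a..b, w x) ^ 2 / 2 := by
  set W : ℝ → ℝ := fun s => ∫ x in a..s, w x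
  have hW : AbsolutelyContinuousOnInterval W a b :=
    hw.absolutelyContinuousOnInterval_intervalIntegral Set.left_mem_uIcc
  have deriv_W : ∫ s in a..b, deriv W s * W s = ∫ s in a..b, w s * W s := by
    refine intervalIntegral.integral_congr_ae ?_
    filter_upwards [hw.ae_hasDerivAt_integral] with s hs hs_mem
    rw [(hs (Set.uIoc_subset_uIcc hs_mem) a Set.left_mem_uIcc).deriv]
  have W_left : W a = 0 := intervalIntegral.integral_same
  have by_parts := hW.integral_mul_deriv_eq_deriv_mul hW
  simp only [mul_comm (W _) (deriv W _), deriv_W, W_left] at by_parts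
  linarith

lemma norm_integral_smul_integral_smul_le (hab : a ≤ b) (hw : IntervalIntegrable w volume a b)
    (hw_nonneg : ∀ x ∈ Set.Ioc a b, 0 ≤ w x) (hg : ∀ x ∈ Set.Ioc a b, ‖g x‖ ≤ M) :
    ‖∫ s in a..b, w s • ∫ x in a..s, w x • g x‖ ≤ M * (∫ x in a..b, w x) ^ 2 / 2 := by
  have inner_bound : ∀ s ∈ Set.Ioc a b,
      ‖∫ x in a..s, w x • g x‖ ≤ M * ∫ x in a..s, w x := fun s hs => by
    have hsub : Set.Ioc a s ⊆ Set.Ioc a b := Set.Ioc_subset_Ioc_right hs.2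
    exact norm_integral_smul_le_mul_integral hs.1.le
      (hw.mono_set (Set.uIcc_subset_uIcc_left (Set.mem_uIcc_of_le hs.1.le hs.2)))
      (fun x hx => hw_nonneg x (hsub hx)) (fun x hx => hg x (hsub hx))
  have hwW : IntervalIntegrable (fun s => w s * ∫ x in a..s, w x) volume a b :=
    hw.mul_continuousOn
      (intervalIntegral.continuousOn_primitive_interval' hw Set.left_mem_uIcc)
  calc ‖∫ s in a..b, w s • ∫ x in a..s, w x • g x‖
      ≤ ∫ s in a..b, M * (w s * ∫ x in a..s, w x) := by
        refine intervalIntegral.norm_integral_le_of_norm_le hab (ae_of_all _ fun s hs => ?_)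
          (hwW.const_mul M)
        rw [norm_smul, Real.norm_of_nonneg (hw_nonneg s hs), mul_left_comm]
        exact mul_le_mul_of_nonneg_left (inner_bound s hs) (hw_nonneg s hs)
    _ = M * (∫ x in a..b, w x) ^ 2 / 2 := by
        rw [intervalIntegral.integral_const_mul, integral_mul_integral_eq_sq_div_two hw,
          mul_div_assoc]

end WeightedIntegrals

section GaussianWeight

lemma integral_exp_neg_mul_sq_le {c r : ℝ} (hc : 0 < c) (hr : 0 ≤ r) :
    ∫ x in 0..r, exp (-c * x ^ 2) ≤ √(π / c) / 2 := by
  rw [← integral_gaussian_Ioi, intervalIntegral.integral_of_le hr]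
  exact setIntegral_mono_set (integrable_exp_neg_mul_sq hc).integrableOn
    (ae_of_all _ fun _ => (exp_pos _).le) Set.Ioc_subset_Ioi_self.eventuallyLE

lemma integral_exp_neg_sub_sq_div_sq_le {a b τ : ℝ} (hab : a ≤ b) (hτ : 0 < τ) :
    ∫ x in a..b, exp (-(b - x) ^ 2 / τ ^ 2) ≤ √π * τ / 2 := by
  calc ∫ x in a..b, exp (-(b - x) ^ 2 / τ ^ 2)
      = ∫ y in 0..(b - a), exp (-(τ ^ 2)⁻¹ * y ^ 2) := by
        rw [intervalIntegral.integral_comp_sub_left (fun y => exp (-y ^ 2 / τ ^ 2)) b, sub_self]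
        simp only [neg_mul, mul_neg, div_eq_inv_mul]
    _ ≤ √(π / (τ ^ 2)⁻¹) / 2 := integral_exp_neg_mul_sq_le (by positivity) (sub_nonneg.2 hab)
    _ = √π * τ / 2 := by rw [div_inv_eq_mul, sqrt_mul pi_pos.le, sqrt_sq hτ.le]

lemma sq_integral_exp_neg_sub_sq_div_sq_le {a b τ : ℝ} (hab : a ≤ b) (hτ : 0 < τ) :
    (∫ x in a..b, exp (-(b - x) ^ 2 / τ ^ 2)) ^ 2 ≤ π * τ ^ 2 / 4 := by
  have h_nonneg : 0 ≤ ∫ x in a..b, exp (-(b - x) ^ 2 / τ ^ 2) :=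
    intervalIntegral.integral_nonneg hab fun _ _ => (exp_pos _).le
  calc (∫ x in a..b, exp (-(b - x) ^ 2 / τ ^ 2)) ^ 2
      ≤ (√π * τ / 2) ^ 2 := pow_le_pow_left₀ h_nonneg (integral_exp_neg_sub_sq_div_sq_le hab hτ) 2
    _ = π * τ ^ 2 / 4 := by rw [div_pow, mul_pow, sq_sqrt pi_pos.le]; norm_num

lemma norm_integral_gaussian_smul_integral_gaussian_smul_le {E : Type*} [NormedAddCommGroup E]
    [NormedSpace ℝ E] {a b τ M : ℝ} (hab : a < b) (hτ : 0 < τ) {g : ℝ → E}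
    (hg : ∀ x ∈ Set.Ioc a b, ‖g x‖ ≤ M) :
    ‖∫ s in a..b, exp (-(b - s) ^ 2 / τ ^ 2) •
        ∫ x in a..s, exp (-(b - x) ^ 2 / τ ^ 2) • g x‖ ≤ π * M * τ ^ 2 / 8 := by
  have hM : 0 ≤ M := (norm_nonneg _).trans (hg b (Set.right_mem_Ioc.2 hab))
  have weight_integrable :
      IntervalIntegrable (fun x => exp (-(b - x) ^ 2 / τ ^ 2)) volume a b :=
    Continuous.intervalIntegrable (by fun_prop) a b
  calc _ ≤ M * (∫ x in a..b, exp (-(b - x) ^ 2 / τ ^ 2)) ^ 2 / 2 :=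
        norm_integral_smul_integral_smul_le hab.le weight_integrable
          (fun _ _ => (exp_pos _).le) hg
    _ ≤ M * (π * τ ^ 2 / 4) / 2 := by
        gcongr
        exact sq_integral_exp_neg_sub_sq_div_sq_le hab.le hτ
    _ = π * M * τ ^ 2 / 8 := by ring

end GaussianWeight

theorem stmt_10_general {E : Type*} [NormedAddCommGroup E] [NormedSpace ℝ E] [CompleteSpace E]
    {t₀ t τ M : ℝ} (ht : t₀ < t) (hτ : 0 < τ) {g : ℝ → E}
    (_hg : AEStronglyMeasurable g (volume.restrict (Set.Ioc t₀ t)))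
    (hM : ∀ x ∈ Set.Ioc t₀ t, ‖g x‖ ≤ M) {Φ : ℝ → E}
    (hΦ : ∀ s ∈ Set.Ioc t₀ t,
      Φ s = (1 / (t - t₀)) • ∫ x in t₀..s, exp (-(t - x) ^ 2 / τ ^ 2) • g x) :
    ‖(1 / (t - t₀)) • ∫ s in t₀..t, exp (-(t - s) ^ 2 / τ ^ 2) • Φ s‖
      ≤ π * M * τ ^ 2 / (8 * (t - t₀) ^ 2) := by
  have pull_out_scale : ∫ s in t₀..t, exp (-(t - s) ^ 2 / τ ^ 2) • Φ s =
      (1 / (t - t₀)) • ∫ s in t₀..t, exp (-(t - s) ^ 2 / τ ^ 2) •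
        ∫ x in t₀..s, exp (-(t - x) ^ 2 / τ ^ 2) • g x := by
    rw [← intervalIntegral.integral_smul]
    refine intervalIntegral.integral_congr_ae (ae_of_all _ fun s hs => ?_)
    rw [hΦ s (Set.uIoc_of_le ht.le ▸ hs), smul_comm]
  rw [pull_out_scale, smul_smul, norm_smul, Real.norm_of_nonneg (mul_self_nonneg _)]
  calc _ ≤ 1 / (t - t₀) * (1 / (t - t₀)) * (π * M * τ ^ 2 / 8) := by
        gcongr
        exact norm_integral_gaussian_smul_integral_gaussian_smul_le ht hτ hM
    _ = π * M * τ ^ 2 / (8 * (t - t₀) ^ 2) := by field_simp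

theorem stmt_10 (t₀ t : ℝ) (ht : t₀ < t) (τ : ℝ) (hτ : 0 < τ) (g : ℝ → ℝ)
    (hg : Measurable g) (M : ℝ) (hM : ∀ x ∈ Set.Icc t₀ t, |g x| ≤ M)
    (Φ : ℝ → ℝ)
    (hΦ : ∀ s, Φ s = (1 / (t - t₀)) * ∫ x in t₀..s, Real.exp (-(t - x) ^ 2 / τ ^ 2) * g x) :
    |(1 / (t - t₀)) * ∫ s in t₀..t, Real.exp (-(t - s) ^ 2 / τ ^ 2) * Φ s|
      ≤ π * M * τ ^ 2 / (4 * (t - t₀) ^ 2) := by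
  have hM_nonneg : 0 ≤ M := (abs_nonneg _).trans (hM t (Set.right_mem_Icc.2 ht.le))
  have sharp_bound := stmt_10_general ht hτ hg.aestronglyMeasurable
    (fun x hx => hM x (Set.Ioc_subset_Icc_self hx)) fun s _ => hΦ s
  exact sharp_bound.trans (by gcongr; norm_num)
end

section
/- Let t₀ < t be reals, τ > 0, and let b : ℝ → ℝ be measurable with |b(s)| ≤ M for all s ∈ [t₀, t]. Then the term dropped when passing from the full volatility to its short-memory asymptotic form satisfies the bound |(1/(t − t₀)) ∫_{t₀}^{t} b(s) · (1/(t − t₀)²) · (∫_{s}^{t} exp(−(t − x)²/τ²) dx) ds| ≤ M τ √π / (2 (t − t₀)²). -/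
open MeasureTheory intervalIntegral Real

/-!
Reflecting `x ↦ t - x` turns the inner integral into a truncation of the half-line Gaussian integral
`∫₀^∞ exp (-y² / τ²) dy = τ √π / 2`, uniformly in `s`. The outer integrand is thus at most
`M τ √π / (2 (t - t₀)²)` in absolute value, and a mean value over `[t₀, t]` inherits this bound.
-/

section NormBounds

variable {E : Type*} [NormedAddCommGroup E] [NormedSpace ℝ E]

lemma norm_intervalAverage_le_of_norm_le_const {f : ℝ → E} {a b C : ℝ} (hab : a ≠ b)
    (hf : ∀ x ∈ Set.uIoc a b, ‖f x‖ ≤ C) : ‖⨍ x in a..b, f x‖ ≤ C := by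
  have hlength : 0 < |b - a| := abs_pos.2 (sub_ne_zero.2 hab.symm)
  rw [interval_average_eq, norm_smul, norm_inv, norm_eq_abs, inv_mul_le_iff₀ hlength, mul_comm]
  exact norm_integral_le_of_norm_le_const hf

lemma norm_intervalIntegral_comp_sub_left_le_integral_Ioi {f : ℝ → E} {s t : ℝ} (hst : s ≤ t)
    (hf : IntegrableOn f (Set.Ioi 0)) :
    ‖∫ x in s..t, f (t - x)‖ ≤ ∫ y in Set.Ioi 0, ‖f y‖ := by
  calc ‖∫ x in s..t, f (t - x)‖
      = ‖∫ y in Set.Ioc 0 (t - s), f y‖ := by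
        rw [integral_comp_sub_left, sub_self, integral_of_le (sub_nonneg.2 hst)]
    _ ≤ ∫ y in Set.Ioc 0 (t - s), ‖f y‖ := norm_integral_le_integral_norm _
    _ ≤ ∫ y in Set.Ioi 0, ‖f y‖ :=
        setIntegral_mono_set hf.norm (.of_forall fun _ => norm_nonneg _)
          Set.Ioc_subset_Ioi_self.eventuallyLE

end NormBounds

section Gaussian

variable {τ : ℝ}

lemma exp_neg_sq_div_sq_eq (y : ℝ) : exp (-y ^ 2 / τ ^ 2) = exp (-(τ ^ 2)⁻¹ * y ^ 2) := by
  congr 1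
  ring

lemma integrable_exp_neg_sq_div_sq (hτ : τ ≠ 0) : Integrable fun y : ℝ => exp (-y ^ 2 / τ ^ 2) := by
  simp only [exp_neg_sq_div_sq_eq]
  exact integrable_exp_neg_mul_sq (by positivity)

lemma integral_Ioi_exp_neg_sq_div_sq (hτ : 0 < τ) :
    ∫ y in Set.Ioi (0 : ℝ), exp (-y ^ 2 / τ ^ 2) = τ * √π / 2 := by
  simp only [exp_neg_sq_div_sq_eq]
  rw [integral_gaussian_Ioi, div_inv_eq_mul, sqrt_mul pi_pos.le, sqrt_sq hτ.le, mul_comm √π]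

lemma abs_intervalIntegral_exp_neg_sub_sq_div_sq_le {s t : ℝ} (hst : s ≤ t) (hτ : 0 < τ) :
    |∫ x in s..t, exp (-(t - x) ^ 2 / τ ^ 2)| ≤ τ * √π / 2 := by
  simpa only [norm_eq_abs, abs_exp, integral_Ioi_exp_neg_sq_div_sq hτ] using
    norm_intervalIntegral_comp_sub_left_le_integral_Ioi hst
      (integrable_exp_neg_sq_div_sq hτ.ne').integrableOn

end Gaussian

theorem stmt_11 (t₀ t : ℝ) (ht : t₀ < t) (τ : ℝ) (hτ : 0 < τ) (b : ℝ → ℝ)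
    (hb : Measurable b) (M : ℝ) (hM : ∀ s ∈ Set.Icc t₀ t, |b s| ≤ M) :
    |(1 / (t - t₀)) * ∫ s in t₀..t,
        b s * ((1 / (t - t₀) ^ 2) * ∫ x in s..t, Real.exp (-(t - x) ^ 2 / τ ^ 2))|
      ≤ M * τ * Real.sqrt π / (2 * (t - t₀) ^ 2) := by
  have hM_nonneg : 0 ≤ M := (abs_nonneg _).trans (hM t ⟨ht.le, le_rfl⟩)
  rw [one_div (t - t₀), ← smul_eq_mul, ← interval_average_eq, ← norm_eq_abs]
  refine norm_intervalAverage_le_of_norm_le_const ht.ne fun s hs => ?_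
  rw [Set.uIoc_of_le ht.le] at hs
  calc |b s * (1 / (t - t₀) ^ 2 * ∫ x in s..t, exp (-(t - x) ^ 2 / τ ^ 2))|
      = |b s| * (1 / (t - t₀) ^ 2 * |∫ x in s..t, exp (-(t - x) ^ 2 / τ ^ 2)|) := by
        rw [abs_mul, abs_mul, abs_of_nonneg (by positivity : 0 ≤ 1 / (t - t₀) ^ 2)]
    _ ≤ M * (1 / (t - t₀) ^ 2 * (τ * √π / 2)) := by
        gcongr
        · exact hM s (Set.Ioc_subset_Icc_self hs)
        · exact abs_intervalIntegral_exp_neg_sub_sq_div_sq_le hs.2 hτ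
    _ = M * τ * √π / (2 * (t - t₀) ^ 2) := by field_simp
end
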